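/- Let B1, B2 be two commuting nilpotent endomorphisms of a finite-dimensional complex vector space V. Then there exists a nilpotent endomorphism B2' of V and a vector w ∈ V such that: (i) B2' commutes with B1; (ii) every linear combination αB2 + βB2' (α, β ∈ ℂ) is nilpotent; (iii) w is a cyclic vector for the pair (B1, B2'), i.e. the vectors B1^a (B2')^b w span V. -/

import Mathlib

/-!
Let `R = K[X]` act on `V` through `B1`, so that the operators commuting with `B1` are the `R`-linear
ones, and put `p = X`, or more generally any irreducible `p` with `p(B1)` nilpotent. As `p` is
nilpotent on `V`, an `R`-linear operator is nilpotent once it is nilpotent modulo `p`.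

Let `p ^ n` be the last power of `p` that does not annihilate `V`. Since `B2` is nilpotent, some `e`
has `p ^ n e ∉ B2 (p ^ n V)`. A submodule `U` containing `B2 (p ^ n V)` and maximal among those
avoiding `p ^ n e` is a complement of `R e`, and it satisfies `B2 V ⊆ U + p V`: modulo `p`, the
operator `B2` maps everything into `U`, so its compression to `U` is again nilpotent. By induction
on the length there is a partner of the compression with a cyclic vector `w ∈ U`. Extend it to `V`
by `e ↦ w`, which is possible because `e` has the smallest annihilator. Then `e` is cyclic, and each
linear combination with `B2` maps `V` into `U` modulo `p`, where it is nilpotent by induction.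
-/

open Module Polynomial Submodule
open scoped Pointwise

section NilpotentModuloIdeal

variable {R M N : Type*} [CommRing R] [AddCommGroup M] [Module R M] [AddCommGroup N] [Module R N]
  {I : Ideal R}

theorem smodEq_smul_top_map {x y : M} (h : x ≡ y [SMOD I • (⊤ : Submodule R M)]) (f : M →ₗ[R] N) :
    f x ≡ f y [SMOD I • (⊤ : Submodule R N)] :=
  (h.map f).mono <| map_smul'' I ⊤ f ▸ smul_mono_right I le_top

theorem isNilpotent_of_range_pow_le_smul_top {n m : ℕ} (hI : I ^ n ≤ annihilator R M)
    {f : End R M} (hf : LinearMap.range (f ^ m) ≤ I • ⊤) : IsNilpotent f := by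
  have range_le (k : ℕ) : LinearMap.range (f ^ (m * k)) ≤ I ^ k • ⊤ := by
    induction k with
    | zero => simp
    | succ k ih =>
      calc LinearMap.range (f ^ (m * (k + 1)))
          = (LinearMap.range (f ^ (m * k))).map (f ^ m) := by
            rw [Nat.mul_succ, add_comm, pow_add, End.mul_eq_comp, LinearMap.range_comp]
        _ ≤ (I ^ k • ⊤ : Submodule R M).map (f ^ m) := map_mono ih
        _ = I ^ k • LinearMap.range (f ^ m) := by rw [map_smul'', LinearMap.range_eq_map]
        _ ≤ I ^ k • I • ⊤ := smul_mono_right _ hf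
        _ = I ^ (k + 1) • ⊤ := by rw [← smul_assoc, smul_eq_mul, pow_succ]
  have smul_top_eq_bot : I ^ n • (⊤ : Submodule R M) = ⊥ := by
    rwa [← le_annihilator_iff, annihilator_top]
  exact ⟨m * n, LinearMap.range_eq_bot.mp (le_bot_iff.mp (smul_top_eq_bot ▸ range_le n))⟩

variable {f : End R M} {g : End R N} {i : N →ₗ[R] M}

theorem pow_apply_smodEq_of_apply_smodEq (h : ∀ y, f (i y) ≡ i (g y) [SMOD I • (⊤ : Submodule R M)])
    (k : ℕ) (y : N) : (f ^ k) (i y) ≡ i ((g ^ k) y) [SMOD I • (⊤ : Submodule R M)] := by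
  induction k with
  | zero => rfl
  | succ k ih =>
    rw [pow_succ', pow_succ', End.mul_apply, End.mul_apply]
    exact (smodEq_smul_top_map ih f).trans (h _)

theorem isNilpotent_of_apply_smodEq_of_range_le {n : ℕ} (hI : I ^ n ≤ annihilator R M)
    (h : ∀ y, f (i y) ≡ i (g y) [SMOD I • (⊤ : Submodule R M)]) (hg : IsNilpotent g)
    (hf : LinearMap.range f ≤ LinearMap.range i ⊔ I • ⊤) : IsNilpotent f := by
  obtain ⟨m, hm⟩ := hg
  refine isNilpotent_of_range_pow_le_smul_top (m := m + 1) hI ?_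
  rintro _ ⟨x, rfl⟩
  obtain ⟨_, ⟨y, rfl⟩, z, hz, hxyz⟩ := mem_sup.mp (hf ⟨x, rfl⟩)
  have fx_smodEq : f x ≡ i y [SMOD I • (⊤ : Submodule R M)] := by
    rwa [SModEq.sub_mem, ← hxyz, add_sub_cancel_left]
  rw [pow_succ, End.mul_apply, ← SModEq.zero]
  have := (smodEq_smul_top_map fx_smodEq (f ^ m)).trans (pow_apply_smodEq_of_apply_smodEq h m y)
  rwa [hm, LinearMap.zero_apply, map_zero] at this

theorem isNilpotent_of_apply_smodEq_of_leftInverse {n : ℕ} (hI : I ^ n ≤ annihilator R N)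
    (h : ∀ y, f (i y) ≡ i (g y) [SMOD I • (⊤ : Submodule R M)]) (hf : IsNilpotent f)
    {π : M →ₗ[R] N} (hπ : Function.LeftInverse π i) : IsNilpotent g := by
  obtain ⟨m, hm⟩ := hf
  refine isNilpotent_of_range_pow_le_smul_top (m := m) hI ?_
  rintro _ ⟨y, rfl⟩
  have := smodEq_smul_top_map (pow_apply_smodEq_of_apply_smodEq h m y) π
  rw [hm, LinearMap.zero_apply, map_zero, hπ] at this
  exact SModEq.zero.mp this.symm

theorem eq_bot_of_le_map_of_isNilpotent (hf : IsNilpotent f) {P : Submodule R M}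
    (hP : P ≤ P.map f) : P = ⊥ := by
  obtain ⟨m, hm⟩ := hf
  have le_map_pow (k : ℕ) : P ≤ P.map (f ^ k) := by
    induction k with
    | zero => simp [End.one_eq_id]
    | succ k ih =>
      rw [pow_succ', End.mul_eq_comp, Submodule.map_comp]
      exact hP.trans (map_mono ih)
  simpa [hm] using le_map_pow m

end NilpotentModuloIdeal

section CyclicSummand

variable {R M : Type*} [CommRing R] [AddCommGroup M] [Module R M]

theorem exists_ge_maximal_notMem {N : Submodule R M} {x : M} (hx : x ∉ N) :
    ∃ U, N ≤ U ∧ Maximal (x ∉ ·) U := by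
  refine zorn_le_nonempty₀ {U : Submodule R M | x ∉ U} (fun c hc hchain y hy ↦ ?_) N hx
  refine ⟨sSup c, fun h ↦ ?_, fun _ ↦ le_sSup⟩
  obtain ⟨U, hU, hxU⟩ := (mem_sSup_of_directed ⟨y, hy⟩ hchain.directedOn).mp h
  exact hc hU hxU

variable {p : R} {n : ℕ} {e : M} {U : Submodule R M}

theorem dvd_of_smul_mem_of_isMaximal (hp : (Ideal.span {p}).IsMaximal) {x : M} (hx : x ∉ U)
    (hpx : p • x ∈ U) {r : R} (hr : r • x ∈ U) : p ∣ r := by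
  by_contra hpr
  obtain ⟨s, q, hq, hsum⟩ := hp.exists_inv (Ideal.mem_span_singleton.not.mpr hpr)
  obtain ⟨t, rfl⟩ := Ideal.mem_span_singleton'.mp hq
  refine hx ?_
  rw [← one_smul R x, ← hsum, add_smul, mul_smul, mul_smul]
  exact add_mem (U.smul_mem s hr) (U.smul_mem t hpx)

theorem dvd_of_smul_pow_smul_mem (hp : (Ideal.span {p}).IsMaximal)
    (hM : p ^ (n + 1) ∈ annihilator R M) (heU : p ^ n • e ∉ U) {r : R}
    (hr : r • p ^ n • e ∈ U) : p ∣ r := by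
  refine dvd_of_smul_mem_of_isMaximal hp heU ?_ hr
  rw [smul_smul, ← pow_succ', mem_annihilator.mp hM]
  exact U.zero_mem

theorem pow_succ_dvd_of_smul_mem (hp : (Ideal.span {p}).IsMaximal)
    (hM : p ^ (n + 1) ∈ annihilator R M) (heU : p ^ n • e ∉ U) {r : R} (hr : r • e ∈ U) :
    p ^ (n + 1) ∣ r := by
  suffices ∀ k ≤ n + 1, p ^ k ∣ r from this _ le_rfl
  intro k hk
  induction k with
  | zero => simp
  | succ k ih =>
    obtain ⟨s, rfl⟩ := ih (by lia)
    have : s • p ^ n • e ∈ U := by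
      have := U.smul_mem (p ^ (n - k)) hr
      rwa [smul_smul, ← mul_assoc, ← pow_add, Nat.sub_add_cancel (by lia), mul_comm, mul_smul]
        at this
    rw [pow_succ]
    exact mul_dvd_mul_left _ (dvd_of_smul_pow_smul_mem hp hM heU this)

theorem disjoint_span_singleton_of_pow_smul_notMem (hp : (Ideal.span {p}).IsMaximal)
    (hM : p ^ (n + 1) ∈ annihilator R M) (heU : p ^ n • e ∉ U) : Disjoint U (R ∙ e) := by
  refine disjoint_def.mpr fun x hxU hx ↦ ?_
  obtain ⟨r, rfl⟩ := mem_span_singleton.mp hx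
  exact mem_annihilator.mp
    (Ideal.mem_of_dvd _ (pow_succ_dvd_of_smul_mem hp hM heU hxU) hM) e

theorem mem_sup_span_singleton_of_smul_mem (hp : (Ideal.span {p}).IsMaximal)
    (hU : Maximal (p ^ n • e ∉ ·) U) {x : M} (hpx : p • x ∈ U) : x ∈ U ⊔ R ∙ e := by
  by_cases hxU : x ∈ U
  · exact mem_sup_left hxU
  have lt_sup : U < U ⊔ R ∙ x := by simpa using hxU
  obtain ⟨u, hu, _, hrx, hsum⟩ := mem_sup.mp (not_not.mp (hU.not_prop_of_gt lt_sup))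
  obtain ⟨r, rfl⟩ := mem_span_singleton.mp hrx
  have hrxUe : r • x ∈ U ⊔ R ∙ e := by
    rw [← eq_sub_iff_add_eq'] at hsum
    exact hsum ▸ sub_mem (mem_sup_right (smul_mem _ _ (mem_span_singleton_self e)))
      (mem_sup_left hu)
  by_contra hxUe
  obtain ⟨s, rfl⟩ := dvd_of_smul_mem_of_isMaximal hp hxUe (mem_sup_left hpx) hrxUe
  refine hU.prop (hsum ▸ add_mem hu ?_)
  rw [mul_comm, mul_smul]
  exact U.smul_mem s hpx

theorem mem_sup_span_singleton_of_smul_mem_sup (hp : (Ideal.span {p}).IsMaximal)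
    (hM : p ^ (n + 1) ∈ annihilator R M) (hU : Maximal (p ^ n • e ∉ ·) U) {x : M}
    (hpx : p • x ∈ U ⊔ R ∙ e) : x ∈ U ⊔ R ∙ e := by
  obtain ⟨u, hu, _, hre, hsum⟩ := mem_sup.mp hpx
  obtain ⟨r, rfl⟩ := mem_span_singleton.mp hre
  obtain ⟨s, rfl⟩ : p ∣ r := by
    refine dvd_of_smul_pow_smul_mem hp hM hU.prop ?_
    have : p ^ n • (u + r • e) = 0 := by
      rw [hsum, smul_smul, ← pow_succ, mem_annihilator.mp hM]
    rw [smul_add, add_eq_zero_iff_eq_neg', smul_comm] at this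
    exact this ▸ U.neg_mem (U.smul_mem _ hu)
  have hpy : p • (x - s • e) ∈ U := by
    rwa [smul_sub, ← hsum, smul_smul, add_sub_cancel_right]
  have hse : s • e ∈ U ⊔ R ∙ e := mem_sup_right (smul_mem _ s (mem_span_singleton_self e))
  exact (sub_mem_iff_left _ hse).mp (mem_sup_span_singleton_of_smul_mem hp hU hpy)

theorem isCompl_span_singleton_of_maximal (hp : (Ideal.span {p}).IsMaximal)
    (hM : p ^ (n + 1) ∈ annihilator R M) (hU : Maximal (p ^ n • e ∉ ·) U) : IsCompl U (R ∙ e) := by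
  refine ⟨disjoint_span_singleton_of_pow_smul_notMem hp hM hU.prop,
    codisjoint_iff_le_sup.mpr fun x _ ↦ ?_⟩
  have mem_of_pow_smul_mem (k : ℕ) : p ^ k • x ∈ U ⊔ R ∙ e → x ∈ U ⊔ R ∙ e := by
    induction k with
    | zero => simp
    | succ k ih =>
      rw [pow_succ', mul_smul]
      exact fun h ↦ ih (mem_sup_span_singleton_of_smul_mem_sup hp hM hU h)
  refine mem_of_pow_smul_mem (n + 1) ?_
  rw [mem_annihilator.mp hM]
  exact zero_mem _

theorem exists_isCompl_span_singleton_range_le [Nontrivial M] (hp : (Ideal.span {p}).IsMaximal)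
    (hM : ∃ m, p ^ m ∈ annihilator R M) {f : End R M} (hf : IsNilpotent f) :
    ∃ (e : M) (U : Submodule R M), IsCompl U (R ∙ e) ∧
      Ideal.torsionOf R M e ≤ annihilator R M ∧
      LinearMap.range f ≤ U ⊔ Ideal.span {p} • ⊤ := by
  obtain ⟨n, hn, hM⟩ : ∃ n, p ^ n ∉ annihilator R M ∧ p ^ (n + 1) ∈ annihilator R M := by
    refine Nat.exists_not_and_succ_of_not_zero_of_exists ?_ hM
    rw [pow_zero, ← Ideal.eq_top_iff_one, Module.annihilator_eq_top_iff]
    exact not_subsingleton M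
  obtain ⟨e, he⟩ : ∃ e, p ^ n • e ∉ (p ^ n • (⊤ : Submodule R M)).map f := by
    contrapose! hn
    have : p ^ n • (⊤ : Submodule R M) = ⊥ := by
      refine eq_bot_of_le_map_of_isNilpotent hf fun x hx ↦ ?_
      obtain ⟨y, -, rfl⟩ := (mem_smul_pointwise_iff_exists _ _ _).mp hx
      exact hn y
    exact mem_annihilator.mpr fun x ↦
      (mem_bot R).mp (this ▸ smul_mem_pointwise_smul x _ ⊤ mem_top)
  obtain ⟨U, hfU, hU⟩ := exists_ge_maximal_notMem he
  have hcompl := isCompl_span_singleton_of_maximal hp hM hU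
  refine ⟨e, U, hcompl, fun r hr ↦ ?_, ?_⟩
  · have hreU : r • e ∈ U := (Ideal.mem_torsionOf_iff e r).mp hr ▸ U.zero_mem
    exact Ideal.mem_of_dvd _ (pow_succ_dvd_of_smul_mem hp hM hU.prop hreU) hM
  · rintro _ ⟨x, rfl⟩
    obtain ⟨u, hu, _, hre, hsum⟩ := mem_sup.mp (hcompl.sup_eq_top ▸ mem_top (x := f x))
    obtain ⟨r, rfl⟩ := mem_span_singleton.mp hre
    have hfx : p ^ n • f x ∈ U :=
      hfU ⟨p ^ n • x, smul_mem_pointwise_smul x _ ⊤ mem_top, map_smul ..⟩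
    have hpr : p ∣ r := by
      refine dvd_of_smul_pow_smul_mem hp hM hU.prop ?_
      rw [← hsum, smul_add, smul_comm _ r] at hfx
      exact (U.add_mem_iff_right (U.smul_mem _ hu)).mp hfx
    rw [← hsum]
    exact add_mem_sup hu (smul_mem_smul (Ideal.mem_span_singleton.mpr hpr) mem_top)

end CyclicSummand

/-- `w` is a cyclic vector for `f`: the smallest `f`-stable submodule containing `w` is `M`. -/
def IsCyclicVector {R M : Type*} [CommRing R] [AddCommGroup M] [Module R M] (f : End R M) (w : M) :
    Prop :=
  span R (Set.range fun k : ℕ ↦ (f ^ k) w) = ⊤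

/-- `g` admits a partner `f` that has a cyclic vector and spans with `g` a space of nilpotent
endomorphisms. For the `K[X]`-module attached to `B₁`, endomorphisms are those commuting with
`B₁`, and such an `f` is the operator `B₂'` paired with `B₂ = g`. -/
def HasCyclicPartner {R M : Type*} [CommRing R] [AddCommGroup M] [Module R M] (g : End R M) :
    Prop :=
  ∃ (f : End R M) (w : M), (∀ α β : R, IsNilpotent (α • g + β • f)) ∧ IsCyclicVector f w

section CyclicPartner

variable {R M : Type*} [CommRing R] [AddCommGroup M] [Module R M] {U W : Submodule R M} {e : M}

/-- The compression of `f` to `U` along a complement `W`: the diagonal block of `f` at `U`. -/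
noncomputable def compression (hUW : IsCompl U W) (f : End R M) : End R U :=
  U.projectionOnto W hUW ∘ₗ f ∘ₗ U.subtype

theorem smodEq_projectionOnto {I : Ideal R} (hUW : IsCompl U W) {x : M} (hx : x ∈ U ⊔ I • ⊤) :
    x ≡ U.projectionOnto W hUW x [SMOD I • (⊤ : Submodule R M)] := by
  obtain ⟨u, hu, z, hz, rfl⟩ := mem_sup.mp hx
  have hz : z ≡ 0 [SMOD I • (⊤ : Submodule R M)] := SModEq.zero.mpr hz
  have hadd : u + z ≡ u [SMOD I • (⊤ : Submodule R M)] := by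
    simpa using (SModEq.refl u).add hz
  have := smodEq_smul_top_map hadd (U.projection W hUW)
  rw [projection_apply_of_mem_left hUW hu] at this
  exact hadd.trans this.symm

theorem exists_linearMap_apply_eq_and_forall_mem_eq_zero {N : Type*} [AddCommGroup N] [Module R N]
    (hcompl : IsCompl U (R ∙ e)) {w : N} (hw : Ideal.torsionOf R M e ≤ Ideal.torsionOf R N w) :
    ∃ s : M →ₗ[R] N, s e = w ∧ ∀ u ∈ U, s u = 0 := by
  let s₀ : (R ∙ e) →ₗ[R] N :=
    liftQ (Ideal.torsionOf R M e) (LinearMap.toSpanSingleton R N w) hw ∘ₗ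
      (Ideal.quotTorsionOfEquivSpanSingleton R M e).symm
  have hs₀ : s₀ ⟨e, mem_span_singleton_self e⟩ = w := by
    have : (Ideal.quotTorsionOfEquivSpanSingleton R M e).symm ⟨e, mem_span_singleton_self e⟩ =
        Submodule.Quotient.mk 1 := by
      rw [LinearEquiv.symm_apply_eq, Ideal.quotTorsionOfEquivSpanSingleton_apply_mk, one_smul]
    rw [LinearMap.comp_apply, LinearEquiv.coe_coe, this]
    exact one_smul R w
  refine ⟨LinearMap.ofIsCompl hcompl 0 s₀, ?_, fun u hu ↦ ?_⟩
  · simpa [hs₀] using LinearMap.ofIsCompl_apply_right hcompl (φ := 0) (ψ := s₀)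
      ⟨e, mem_span_singleton_self e⟩
  · simpa using LinearMap.ofIsCompl_apply_left hcompl (φ := 0) (ψ := s₀) ⟨u, hu⟩

theorem isCyclicVector_of_isCyclicVector_apply (hU : U ⊔ R ∙ e = ⊤) {f : End R M} {g : End R U}
    {w : U} (hfg : ∀ u : U, f u = g u) (hfe : f e = w) (hg : IsCyclicVector g w) :
    IsCyclicVector f e := by
  have pow_apply (k : ℕ) (u : U) : (f ^ k) u = (g ^ k) u :=
    LinearMap.congr_fun (End.commute_pow_left_of_commute (f := U.subtype) (LinearMap.ext hfg) k) u
  refine top_le_iff.mp (hU ▸ sup_le ?_ ?_)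
  · rw [← map_subtype_top U, ← hg, map_span_le]
    rintro _ ⟨k, rfl⟩
    refine subset_span ⟨k + 1, show (f ^ (k + 1)) e = _ from ?_⟩
    rw [subtype_apply, ← pow_apply, ← hfe, pow_succ, End.mul_apply]
  · exact (span_singleton_le_iff_mem _ _).mpr (subset_span ⟨0, rfl⟩)

theorem HasCyclicPartner.of_compression {I : Ideal R} {n : ℕ} (hI : I ^ n ≤ annihilator R M)
    (hcompl : IsCompl U (R ∙ e)) (he : Ideal.torsionOf R M e ≤ annihilator R M) {g : End R M}
    (hg : LinearMap.range g ≤ U ⊔ I • ⊤) (h : HasCyclicPartner (compression hcompl g)) :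
    HasCyclicPartner g := by
  obtain ⟨c, w, hnil, hcyc⟩ := h
  obtain ⟨s, hse, hsU⟩ := exists_linearMap_apply_eq_and_forall_mem_eq_zero hcompl (w := w)
    fun r hr ↦ Subtype.ext (mem_annihilator.mp (he hr) w)
  let f : End R M := U.subtype ∘ₗ (c ∘ₗ U.projectionOnto _ hcompl + s)
  have hf_mem (x : M) : f x ∈ U := (c (U.projectionOnto _ hcompl x) + s x).2
  have hfU (u : U) : f u = c u := by simp [f, hsU]
  have hfe : f e = w := by
    simp [f, hse, (projectionOnto_apply_eq_zero_iff hcompl).mpr (mem_span_singleton_self e)]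
  refine ⟨f, e, fun α β ↦ ?_, isCyclicVector_of_isCyclicVector_apply hcompl.sup_eq_top hfU hfe hcyc⟩
  refine isNilpotent_of_apply_smodEq_of_range_le (i := U.subtype) hI (fun u ↦ ?_) (hnil α β) ?_
  · have hgu := (smodEq_projectionOnto hcompl (hg ⟨u, rfl⟩)).smul α
    simpa [compression, hfU] using hgu.add (SModEq.refl (β • (c u : M)))
  · rw [range_subtype]
    rintro _ ⟨x, rfl⟩
    exact add_mem (smul_mem _ α (hg ⟨x, rfl⟩)) (smul_mem _ β (mem_sup_left (hf_mem x)))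

theorem isNilpotent_compression {I : Ideal R} {n : ℕ} (hI : I ^ n ≤ annihilator R M)
    (hUW : IsCompl U W) {f : End R M} (hf : IsNilpotent f)
    (hfU : LinearMap.range f ≤ U ⊔ I • ⊤) : IsNilpotent (compression hUW f) :=
  isNilpotent_of_apply_smodEq_of_leftInverse (i := U.subtype) (π := U.projectionOnto W hUW)
    (hI.trans (U.subtype.annihilator_le_of_injective U.injective_subtype))
    (fun u ↦ smodEq_projectionOnto hUW (hfU ⟨u, rfl⟩)) hf (projectionOnto_apply_left hUW)

theorem hasCyclicPartner_of_isNilpotent [IsNoetherian R M] [IsArtinian R M] {p : R}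
    (hp : (Ideal.span {p}).IsMaximal) {n : ℕ} (hM : p ^ n ∈ annihilator R M)
    {g : End R M} (hg : IsNilpotent g) : HasCyclicPartner g := by
  induction hl : Module.length R M using WellFoundedLT.induction generalizing M with
  | _ l ih =>
  subst hl
  rcases subsingleton_or_nontrivial M with _ | _
  · exact ⟨0, 0, fun α β ↦ ⟨1, Subsingleton.elim _ _⟩, Subsingleton.elim _ _⟩
  obtain ⟨e, U, hcompl, he, hgU⟩ := exists_isCompl_span_singleton_range_le hp ⟨n, hM⟩ hg
  have hI : Ideal.span {p} ^ n ≤ annihilator R M := by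
    rwa [Ideal.span_singleton_pow, Ideal.span_singleton_le_iff_mem]
  have hU : U ≠ ⊤ := by
    rintro rfl
    have he0 : e = 0 := span_singleton_eq_bot.mp (top_disjoint.mp hcompl.disjoint)
    rw [he0, Ideal.torsionOf_zero, top_le_iff, Module.annihilator_eq_top_iff] at he
    exact not_subsingleton M he
  refine .of_compression hI hcompl he hgU (ih _ (length_lt hU) ?_ ?_ rfl)
  · exact U.subtype.annihilator_le_of_injective U.injective_subtype hM
  · exact isNilpotent_compression hI hcompl hg hgU

end CyclicPartner

section PolynomialModule

variable {R M : Type*} [CommRing R] [AddCommGroup M] [Module R M] (f : End R M)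

/-- The endomorphisms of the `R[X]`-module `AEval' f` as `R`-linear endomorphisms of `M`; its range
is the commutant of `f`. -/
noncomputable def endAEvalHom : End R[X] (AEval' f) →ₐ[R] End R M where
  toFun g := (AEval'.of f).symm.conj (g.restrictScalars R)
  map_one' := rfl
  map_mul' _ _ := rfl
  map_zero' := rfl
  map_add' _ _ := rfl
  commutes' _ := rfl

theorem endAEvalHom_injective : Function.Injective (endAEvalHom f) := fun _ _ h ↦
  LinearMap.ext fun x ↦ (LinearMap.congr_fun h x :)

theorem endAEvalHom_C_smul (r : R) (g : End R[X] (AEval' f)) :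
    endAEvalHom f (C r • g) = r • endAEvalHom f g := by
  rw [C_eq_algebraMap, algebraMap_smul, map_smul]

theorem commute_endAEvalHom (g : End R[X] (AEval' f)) : Commute f (endAEvalHom f g) := by
  ext x
  have := g.map_smul X (AEval'.of f x)
  rw [AEval'.X_smul_of] at this
  exact (AEval'.of_symm_X_smul f _).symm.trans (congrArg (AEval'.of f).symm this.symm)

theorem exists_endAEvalHom_eq {g : End R M} (h : Commute f g) : ∃ g', endAEvalHom f g' = g := by
  refine ⟨LinearMap.ofAEval f ((AEval'.of f).toLinearMap ∘ₗ g) fun x ↦ ?_, rfl⟩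
  exact (congrArg (AEval'.of f) (LinearMap.congr_fun h x :).symm).trans
    (AEval'.X_smul_of f (g x)).symm

theorem span_range_X_pow : span R (Set.range fun n : ℕ ↦ (X ^ n : R[X])) = ⊤ := by
  simpa [← monomial_one_right_eq_X_pow] using (basisMonomials R).span_eq

theorem IsCyclicVector.span_range_pow_mul_pow_apply {g : End R[X] (AEval' f)} {w : M}
    (h : IsCyclicVector g (AEval'.of f w)) :
    span R (Set.range fun q : ℕ × ℕ ↦ (f ^ q.1 * endAEvalHom f g ^ q.2) w) = ⊤ := by
  have of_apply (q : ℕ × ℕ) : AEval'.of f ((f ^ q.1 * endAEvalHom f g ^ q.2) w) =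
      (X ^ q.1 : R[X]) • (g ^ q.2) (AEval'.of f w) := by
    rw [← map_pow]
    exact (AEval'.X_pow_smul_of f _ q.1).symm
  refine map_injective_of_injective (AEval'.of f).injective ?_
  calc (span R (Set.range fun q : ℕ × ℕ ↦ (f ^ q.1 * endAEvalHom f g ^ q.2) w)).map
        (AEval'.of f).toLinearMap
      = span R ((Set.range fun n : ℕ ↦ (X ^ n : R[X])) •
          Set.range fun k : ℕ ↦ (g ^ k) (AEval'.of f w)) := by
        rw [map_span, ← Set.range_comp, ← Set.image2_smul, Set.image2_range]
        exact congrArg (span R <| Set.range ·) (funext of_apply)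
    _ = (span R[X] (Set.range fun k : ℕ ↦ (g ^ k) (AEval'.of f w))).restrictScalars R :=
        span_smul_of_span_eq_top span_range_X_pow _
    _ = (⊤ : Submodule R M).map (AEval'.of f).toLinearMap := by
        rw [h, restrictScalars_top, Submodule.map_top, LinearEquiv.range]

end PolynomialModule

theorem stmt1_general {K V : Type*} [Field K] [AddCommGroup V] [Module K V] [FiniteDimensional K V]
    (B1 B2 : End K V) {p : K[X]} (hp : Irreducible p) (hB1 : IsNilpotent (aeval B1 p))
    (hB2 : IsNilpotent B2) (hcomm : Commute B1 B2) :
    ∃ (B2' : End K V) (w : V),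
      IsNilpotent B2' ∧
      Commute B1 B2' ∧
      (∀ α β : K, IsNilpotent (α • B2 + β • B2')) ∧
      span K (Set.range fun q : ℕ × ℕ ↦ (B1 ^ q.1 * B2' ^ q.2) w) = ⊤ := by
  obtain ⟨g, rfl⟩ := exists_endAEvalHom_eq B1 hcomm
  obtain ⟨n, hn⟩ := hB1
  have : IsNoetherian K[X] (AEval' B1) := isNoetherian_of_tower K inferInstance
  have : IsArtinian K[X] (AEval' B1) := isArtinian_of_tower K inferInstance
  have hM : p ^ n ∈ annihilator K[X] (AEval' B1) := by
    rw [AEval.annihilator_eq_ker_aeval, RingHom.mem_ker, map_pow, hn]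
  obtain ⟨f, w, hnil, hcyc⟩ := hasCyclicPartner_of_isNilpotent
    (PrincipalIdealRing.isMaximal_of_irreducible hp) hM
    ((IsNilpotent.map_iff (endAEvalHom_injective B1)).mp hB2)
  have hnil' (α β : K) : IsNilpotent (α • endAEvalHom B1 g + β • endAEvalHom B1 f) := by
    simpa only [map_add, endAEvalHom_C_smul] using (hnil (C α) (C β)).map (endAEvalHom B1)
  exact ⟨endAEvalHom B1 f, (AEval'.of B1).symm w, by simpa using hnil' 0 1,
    commute_endAEvalHom B1 f, hnil', hcyc.span_range_pow_mul_pow_apply⟩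

/-- Given commuting nilpotent endomorphisms `B₁, B₂` of a finite-dimensional complex
vector space, there is a nilpotent `B₂'` commuting with `B₁`, all of whose linear
combinations with `B₂` are nilpotent, and which together with `B₁` admits a cyclic
vector `w`. -/
theorem stmt1 {V : Type*} [AddCommGroup V] [Module ℂ V] [FiniteDimensional ℂ V]
    (B1 B2 : Module.End ℂ V) (hn1 : IsNilpotent B1) (hn2 : IsNilpotent B2)
    (hcomm : Commute B1 B2) :
    ∃ (B2' : Module.End ℂ V) (w : V),
      IsNilpotent B2' ∧
      Commute B1 B2' ∧
      (∀ α β : ℂ, IsNilpotent (α • B2 + β • B2')) ∧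
      Submodule.span ℂ (Set.range fun p : ℕ × ℕ => (B1 ^ p.1 * B2' ^ p.2) w) = ⊤ :=
  stmt1_general B1 B2 irreducible_X (by rwa [aeval_X]) hn2 hcomm
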